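/- Let p > 1 and a, b, L > 0, and let u be a nontrivial C¹ weak solution of −Δ^{a,b}_p u = λ^{a,b}_{1,p}(0,L) |u|^{p−2} u on (0,L) with u(0) = u(L) = 0. Then u has definite sign: either u(t) > 0 for all t ∈ (0,L), or u(t) < 0 for all t ∈ (0,L). -/

import Mathlib

open Set

/-- `u` is C¹ on `[α, γ]` with derivative `u'` there. -/
def C1On (α γ : ℝ) (u u' : ℝ → ℝ) : Prop :=
  (∀ t ∈ Set.Icc α γ, HasDerivWithinAt u (u' t) (Set.Icc α γ) t) ∧
  ContinuousOn u' (Set.Icc α γ)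

/-- Admissible functions on `[0, L]`: C¹ with zero boundary values. -/
def Adm (L : ℝ) (u u' : ℝ → ℝ) : Prop :=
  C1On 0 L u u' ∧ u 0 = 0 ∧ u L = 0

/-- The asymmetric energy integrand `a^p (s⁺)^p + b^p (s⁻)^p`. -/
noncomputable def asymE (p a b s : ℝ) : ℝ :=
  a ^ p * (max s 0) ^ p + b ^ p * (max (-s) 0) ^ p

/-- The asymmetric flux `a^p (s⁺)^(p-1) - b^p (s⁻)^(p-1)`. -/
noncomputable def asymFlux (p a b s : ℝ) : ℝ :=
  a ^ p * (max s 0) ^ (p - 1) - b ^ p * (max (-s) 0) ^ (p - 1)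

/-- The first Dirichlet eigenvalue `λ^{a,b}_{1,p}(0,L)`, as the infimum of the
asymmetric energy over normalized admissible functions. -/
noncomputable def lam1 (p a b L : ℝ) : ℝ :=
  sInf { E : ℝ | ∃ u u' : ℝ → ℝ, Adm L u u' ∧
    (∫ t in (0:ℝ)..L, |u t| ^ p) = 1 ∧
    E = ∫ t in (0:ℝ)..L, asymE p a b (u' t) }

/-- `u` (a C¹ function on `[0,L]` with derivative `u'` and zero boundary values)
is a weak solution of `-Δ^{a,b}_p u = g` on `(0,L)`. -/
def IsWeakSol (p a b L : ℝ) (u u' g : ℝ → ℝ) : Prop :=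
  Adm L u u' ∧
  ∀ φ φ' : ℝ → ℝ, Adm L φ φ' →
    (∫ t in (0:ℝ)..L, asymFlux p a b (u' t) * φ' t) =
      ∫ t in (0:ℝ)..L, g t * φ t

/-! Testing the equation against arbitrary C¹ functions and applying du Bois-Reymond's lemma shows
that the flux of `u'` is itself C¹, so the equation may be multiplied by `u` and integrated by parts
between any two zeros `x < y` of `u`. This gives `∫ₓʸ E(u') = λ ∫ₓʸ |u|ᵖ`. Rescaling `[x, y]` to
`[0, L]` turns the variational definition of `λ` into `λ ∫ₓʸ |u|ᵖ ≤ ((y - x) / L)ᵖ ∫ₓʸ E(u')`. If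
`y - x < L` the factor is less than `1`, so the energy on `[x, y]` vanishes and `u = 0` there.
An interior zero would thus annihilate `u` on both sides, and a function without interior zeros
has a sign.
-/

namespace C1On

variable {α γ : ℝ} {u u' v v' : ℝ → ℝ}

theorem continuousOn (hu : C1On α γ u u') : ContinuousOn u (Icc α γ) :=
  fun t ht => (hu.1 t ht).continuousWithinAt

theorem mono (hu : C1On α γ u u') {x y : ℝ} (hxy : Icc x y ⊆ Icc α γ) : C1On x y u u' :=
  ⟨fun t ht => (hu.1 t (hxy ht)).mono hxy, hu.2.mono hxy⟩

theorem congr (hu : C1On α γ u u') (huv : EqOn v u (Icc α γ)) : C1On α γ v u' :=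
  ⟨fun t ht => (hu.1 t ht).congr huv (huv ht), hu.2⟩

theorem const_sub (hu : C1On α γ u u') (k : ℝ) : C1On α γ (fun t => k - u t) (fun t => -u' t) :=
  ⟨fun t ht => (hu.1 t ht).const_sub k, hu.2.neg⟩

theorem const_mul (hu : C1On α γ u u') (k : ℝ) :
    C1On α γ (fun t => k * u t) (fun t => k * u' t) :=
  ⟨fun t ht => (hu.1 t ht).const_mul k, continuousOn_const.mul hu.2⟩

theorem comp_mul_add (hu : C1On α γ u u') {x y r d : ℝ}
    (hmaps : MapsTo (fun t => r * t + d) (Icc x y) (Icc α γ)) :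
    C1On x y (fun t => u (r * t + d)) (fun t => r * u' (r * t + d)) := by
  refine ⟨fun t ht => ?_, continuousOn_const.mul (hu.2.comp (by fun_prop) hmaps)⟩
  have hinner : HasDerivWithinAt (fun t => r * t + d) r (Icc x y) t := by
    simpa using (((hasDerivAt_id t).const_mul r).add_const d).hasDerivWithinAt
  exact ((hu.1 _ (hmaps ht)).comp t hinner hmaps).congr_deriv (mul_comm _ _)

theorem integral_mul_deriv (hu : C1On α γ u u') (hv : C1On α γ v v') (hαγ : α ≤ γ)
    (hα : v α = 0) (hγ : v γ = 0) : ∫ t in α..γ, u t * v' t = -∫ t in α..γ, u' t * v t := by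
  rw [intervalIntegral.integral_mul_deriv_eq_deriv_mul_of_hasDerivWithinAt
    (by simpa only [uIcc_of_le hαγ] using hu.1) (by simpa only [uIcc_of_le hαγ] using hv.1)
    (hu.2.intervalIntegrable_of_Icc hαγ) (hv.2.intervalIntegrable_of_Icc hαγ), hα, hγ]
  ring

theorem eqOn_zero_of_deriv (hu : C1On α γ u u') (hα : u α = 0) (hu' : EqOn u' 0 (Icc α γ)) :
    EqOn u 0 (Icc α γ) := by
  refine fun s hs =>
    (constant_of_has_deriv_right_zero hu.continuousOn (fun t ht => ?_) s hs).trans hα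
  have hderiv := hu.1 t (Ico_subset_Icc_self ht)
  rw [hu' (Ico_subset_Icc_self ht)] at hderiv
  exact hderiv.mono_of_mem_nhdsWithin (Icc_mem_nhdsGE_of_mem ht)

end C1On

theorem c1On_integral {α γ : ℝ} {f : ℝ → ℝ} (hf : ContinuousOn f (Icc α γ)) :
    C1On α γ (fun t => ∫ s in α..t, f s) f := by
  refine ⟨fun t ht => ?_, hf⟩
  have : Fact (t ∈ Icc α γ) := ⟨ht⟩
  exact intervalIntegral.integral_hasDerivWithinAt_right
    ((hf.mono (Icc_subset_Icc_right ht.2)).intervalIntegrable_of_Icc ht.1)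
    (hf.stronglyMeasurableAtFilter_nhdsWithin measurableSet_Icc t) (hf t ht)

theorem eqOn_zero_of_integral_nonpos {α γ : ℝ} {f : ℝ → ℝ} (hαγ : α < γ)
    (hf : ContinuousOn f (Icc α γ)) (hf₀ : ∀ t ∈ Icc α γ, 0 ≤ f t)
    (hint : ∫ t in α..γ, f t ≤ 0) : EqOn f 0 (Icc α γ) := by
  intro t ht
  by_contra hne
  exact hint.not_gt <| intervalIntegral.integral_pos hαγ hf
    (fun s hs => hf₀ s (Ioc_subset_Icc_self hs)) ⟨t, ht, (hf₀ t ht).lt_of_ne' hne⟩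

theorem pos_or_neg_of_isPreconnected {X Y : Type*} [TopologicalSpace X] [LinearOrder Y]
    [TopologicalSpace Y] [OrderClosedTopology Y] [Zero Y] {s : Set X} {f : X → Y}
    (hs : IsPreconnected s) (hf : ContinuousOn f s) (hne : ∀ x ∈ s, f x ≠ 0) :
    (∀ x ∈ s, 0 < f x) ∨ ∀ x ∈ s, f x < 0 := by
  by_contra! ⟨⟨x, hx, hfx⟩, y, hy, hfy⟩
  obtain ⟨c, hc, hfc⟩ := hs.intermediate_value hx hy hf ⟨hfx, hfy⟩
  exact hne c hc hfc

section DuBoisReymond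

variable {α γ : ℝ} {w g : ℝ → ℝ}

theorem exists_const_of_integral_mul_deriv_eq_zero (hαγ : α < γ) (hw : ContinuousOn w (Icc α γ))
    (h : ∀ φ φ' : ℝ → ℝ, C1On α γ φ φ' → φ α = 0 → φ γ = 0 → ∫ t in α..γ, w t * φ' t = 0) :
    ∃ K : ℝ, ∀ t ∈ Icc α γ, w t = K := by
  set K : ℝ := (∫ t in α..γ, w t) / (γ - α) with hK
  have hψ : ContinuousOn (fun t => w t - K) (Icc α γ) := hw.sub continuousOn_const
  have hmean : ∫ t in α..γ, (w t - K) = 0 := by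
    have hlen : γ - α ≠ 0 := (sub_pos.2 hαγ).ne'
    rw [intervalIntegral.integral_sub (hw.intervalIntegrable_of_Icc hαγ.le) (by simp),
      intervalIntegral.integral_const, smul_eq_mul, hK, mul_div_cancel₀ _ hlen, sub_self]
  -- The primitive of `w - K` is the test function that makes `∫ w φ'` equal to `∫ (w - K)²`.
  have htest : ∫ t in α..γ, w t * (w t - K) = 0 :=
    h _ _ (c1On_integral hψ) intervalIntegral.integral_same hmean
  have hsq : ∫ t in α..γ, (w t - K) ^ 2 = 0 :=
    calc ∫ t in α..γ, (w t - K) ^ 2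
        = ∫ t in α..γ, (w t * (w t - K) - K * (w t - K)) := by congr 1; ext t; ring
      _ = 0 := by
        rw [intervalIntegral.integral_sub
          (ContinuousOn.intervalIntegrable_of_Icc hαγ.le (by fun_prop))
          (ContinuousOn.intervalIntegrable_of_Icc hαγ.le (by fun_prop)),
          htest, intervalIntegral.integral_const_mul, hmean, mul_zero, sub_zero]
  have hsq₀ : EqOn (fun t => (w t - K) ^ 2) 0 (Icc α γ) :=
    eqOn_zero_of_integral_nonpos hαγ (hψ.pow 2) (fun _ _ => sq_nonneg _) hsq.le
  exact ⟨K, fun t ht => sub_eq_zero.1 (pow_eq_zero_iff two_ne_zero |>.1 (hsq₀ ht))⟩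

theorem c1On_of_integral_mul_deriv_eq (hαγ : α < γ) (hw : ContinuousOn w (Icc α γ))
    (hg : ContinuousOn g (Icc α γ))
    (h : ∀ φ φ' : ℝ → ℝ, C1On α γ φ φ' → φ α = 0 → φ γ = 0 →
      ∫ t in α..γ, w t * φ' t = ∫ t in α..γ, g t * φ t) :
    C1On α γ w (fun t => -g t) := by
  set G : ℝ → ℝ := fun t => ∫ s in α..t, g s
  have hG : C1On α γ G g := c1On_integral hg
  obtain ⟨K, hK⟩ : ∃ K : ℝ, ∀ t ∈ Icc α γ, w t + G t = K := by
    refine exists_const_of_integral_mul_deriv_eq_zero hαγ (hw.add hG.continuousOn)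
      fun φ φ' hφ hφα hφγ => ?_
    have hwφ : ContinuousOn (fun t => w t * φ' t) (Icc α γ) := hw.mul hφ.2
    have hGφ : ContinuousOn (fun t => G t * φ' t) (Icc α γ) := hG.continuousOn.mul hφ.2
    simp only [add_mul]
    rw [intervalIntegral.integral_add (hwφ.intervalIntegrable_of_Icc hαγ.le)
      (hGφ.intervalIntegrable_of_Icc hαγ.le), h φ φ' hφ hφα hφγ,
      hG.integral_mul_deriv hφ hαγ.le hφα hφγ, add_neg_cancel]
  exact (hG.const_sub K).congr fun t ht => eq_sub_of_add_eq (hK t ht)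

end DuBoisReymond

theorem abs_rpow_sub_two_mul_self_mul_self {p : ℝ} (hp : p ≠ 0) (s : ℝ) :
    |s| ^ (p - 2) * s * s = |s| ^ p := by
  rcases eq_or_ne s 0 with rfl | hs
  · simp [Real.zero_rpow hp]
  · rw [mul_assoc, ← abs_mul_abs_self s, ← sq, ← Real.rpow_two, ← Real.rpow_add (abs_pos.2 hs),
      sub_add_cancel]

theorem continuous_abs_rpow_sub_two_mul_self {p : ℝ} (hp : 1 < p) :
    Continuous fun s : ℝ => |s| ^ (p - 2) * s := by
  have hderiv : deriv (fun s : ℝ => |s| ^ p) = fun s => p * (|s| ^ (p - 2) * s) := by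
    ext s
    rw [(hasDerivAt_abs_rpow s hp).deriv, mul_assoc]
  have hcont : Continuous (deriv fun s : ℝ => |s| ^ p) :=
    (contDiff_norm_rpow hp).continuous_deriv le_rfl
  rw [hderiv] at hcont
  exact (continuous_const_smul_iff₀ (zero_lt_one.trans hp).ne').1 hcont

section Integrands

variable {p a b : ℝ}

theorem continuous_asymFlux (hp : 1 ≤ p) : Continuous (asymFlux p a b) := by
  have hp' : 0 ≤ p - 1 := sub_nonneg.2 hp
  unfold asymFlux
  fun_prop (disch := exact Or.inr hp')

theorem continuous_asymE (hp : 0 ≤ p) : Continuous (asymE p a b) := by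
  unfold asymE
  fun_prop (disch := exact Or.inr hp)

theorem asymFlux_mul_self (hp : 1 < p) (s : ℝ) : asymFlux p a b s * s = asymE p a b s := by
  have hzero₁ : (0 : ℝ) ^ (p - 1) = 0 := Real.zero_rpow (sub_pos.2 hp).ne'
  have hzero : (0 : ℝ) ^ p = 0 := Real.zero_rpow (zero_lt_one.trans hp).ne'
  have hpow {x : ℝ} (hx : 0 ≤ x) : x ^ p = x ^ (p - 1) * x := by
    rw [← Real.rpow_add_one' hx (by linarith), sub_add_cancel]
  rcases le_total 0 s with hs | hs
  · simp only [asymFlux, asymE, max_eq_left hs, max_eq_right (neg_nonpos.2 hs), hzero₁, hzero,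
      hpow hs]
    ring
  · simp only [asymFlux, asymE, max_eq_right hs, max_eq_left (neg_nonneg.2 hs), hzero₁, hzero,
      hpow (neg_nonneg.2 hs)]
    ring

theorem asymE_nonneg (ha : 0 ≤ a) (hb : 0 ≤ b) (s : ℝ) : 0 ≤ asymE p a b s := by
  unfold asymE
  positivity

theorem asymE_pos (ha : 0 < a) (hb : 0 < b) {s : ℝ} (hs : s ≠ 0) : 0 < asymE p a b s := by
  unfold asymE
  rcases hs.lt_or_gt with hneg | hpos
  · have : 0 < max (-s) 0 := lt_max_of_lt_left (neg_pos.2 hneg)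
    positivity
  · have : 0 < max s 0 := lt_max_of_lt_left hpos
    positivity

theorem asymE_mul {k : ℝ} (hk : 0 ≤ k) (s : ℝ) : asymE p a b (k * s) = k ^ p * asymE p a b s := by
  have hmax (x : ℝ) : max (k * x) 0 ^ p = k ^ p * max x 0 ^ p := by
    rw [← Real.mul_rpow hk (le_max_right _ _), mul_max_of_nonneg _ _ hk, mul_zero]
  simp only [asymE, ← mul_neg, hmax]
  ring

end Integrands

theorem C1On.eqOn_zero_of_integral_asymE_nonpos {p a b α γ : ℝ} {u u' : ℝ → ℝ} (hp : 0 ≤ p)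
    (ha : 0 < a) (hb : 0 < b) (hu : C1On α γ u u') (hαγ : α < γ) (hα : u α = 0)
    (hE : ∫ t in α..γ, asymE p a b (u' t) ≤ 0) : EqOn u 0 (Icc α γ) := by
  have hzero : EqOn (fun t => asymE p a b (u' t)) 0 (Icc α γ) :=
    eqOn_zero_of_integral_nonpos hαγ ((continuous_asymE hp).comp_continuousOn hu.2)
      (fun t _ => asymE_nonneg ha.le hb.le (u' t)) hE
  refine hu.eqOn_zero_of_deriv hα fun t ht => ?_
  by_contra hne
  exact (asymE_pos ha hb hne).ne' (hzero ht)

section Rayleigh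

variable {p a b L : ℝ} {u u' : ℝ → ℝ}

theorem lam1_le_integral_asymE (ha : 0 ≤ a) (hb : 0 ≤ b) (hL : 0 ≤ L) (hu : Adm L u u')
    (hnorm : ∫ t in (0 : ℝ)..L, |u t| ^ p = 1) :
    lam1 p a b L ≤ ∫ t in (0 : ℝ)..L, asymE p a b (u' t) := by
  refine csInf_le ⟨0, ?_⟩ ⟨u, u', hu, hnorm, rfl⟩
  rintro _ ⟨v, v', -, -, rfl⟩
  exact intervalIntegral.integral_nonneg_of_forall hL fun t => asymE_nonneg ha hb (v' t)

theorem lam1_mul_integral_abs_rpow_le (hp : p ≠ 0) (ha : 0 ≤ a) (hb : 0 ≤ b) (hL : 0 ≤ L)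
    (hu : Adm L u u') :
    lam1 p a b L * ∫ t in (0 : ℝ)..L, |u t| ^ p ≤ ∫ t in (0 : ℝ)..L, asymE p a b (u' t) := by
  set M : ℝ := ∫ t in (0 : ℝ)..L, |u t| ^ p
  have hM₀ : 0 ≤ M := intervalIntegral.integral_nonneg_of_forall hL fun t => by positivity
  rcases hM₀.eq_or_lt with hM | hM
  · rw [← hM, mul_zero]
    exact intervalIntegral.integral_nonneg_of_forall hL fun t => asymE_nonneg ha hb (u' t)
  set k : ℝ := M⁻¹ ^ p⁻¹
  have hk : 0 ≤ k := by positivity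
  have hkp : k ^ p = M⁻¹ := Real.rpow_inv_rpow (inv_nonneg.2 hM₀) hp
  have hku : Adm L (fun t => k * u t) (fun t => k * u' t) :=
    ⟨hu.1.const_mul k, by simp [hu.2.1], by simp [hu.2.2]⟩
  have hnorm : ∫ t in (0 : ℝ)..L, |k * u t| ^ p = 1 := by
    simp only [abs_mul, abs_of_nonneg hk, Real.mul_rpow hk (abs_nonneg _),
      intervalIntegral.integral_const_mul, hkp]
    exact inv_mul_cancel₀ hM.ne'
  have hle := lam1_le_integral_asymE ha hb hL hku hnorm
  simp only [asymE_mul hk, intervalIntegral.integral_const_mul, hkp] at hle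
  rwa [inv_mul_eq_div, le_div_iff₀ hM] at hle

theorem lam1_mul_integral_abs_rpow_le_div_rpow_mul {α γ : ℝ} (hp : p ≠ 0) (ha : 0 ≤ a)
    (hb : 0 ≤ b) (hL : 0 < L) (hαγ : α < γ) (hu : C1On α γ u u') (hα : u α = 0) (hγ : u γ = 0) :
    lam1 p a b L * ∫ t in α..γ, |u t| ^ p ≤
      ((γ - α) / L) ^ p * ∫ t in α..γ, asymE p a b (u' t) := by
  set r : ℝ := (γ - α) / L
  have hr : 0 < r := div_pos (sub_pos.2 hαγ) hL
  have hrL : r * L + α = γ := by rw [div_mul_cancel₀ _ hL.ne', sub_add_cancel]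
  have hmaps : MapsTo (fun t => r * t + α) (Icc 0 L) (Icc α γ) := fun t ht =>
    ⟨by linarith [mul_nonneg hr.le ht.1], by
      rw [← hrL]; linarith [mul_le_mul_of_nonneg_left ht.2 hr.le]⟩
  have hv : Adm L (fun t => u (r * t + α)) (fun t => r * u' (r * t + α)) :=
    ⟨hu.comp_mul_add hmaps, by simp [hα], by simp [hrL, hγ]⟩
  have hchange (f : ℝ → ℝ) : ∫ t in (0 : ℝ)..L, f (r * t + α) = r⁻¹ * ∫ t in α..γ, f t := by
    rw [intervalIntegral.integral_comp_mul_add _ hr.ne', mul_zero, zero_add, hrL, smul_eq_mul]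
  have hle := lam1_mul_integral_abs_rpow_le hp ha hb hL.le hv
  simp only [asymE_mul hr.le, intervalIntegral.integral_const_mul] at hle
  rw [hchange fun t => |u t| ^ p, hchange fun t => asymE p a b (u' t), mul_left_comm,
    mul_left_comm (r ^ p)] at hle
  exact le_of_mul_le_mul_left hle (inv_pos.2 hr)

end Rayleigh

namespace IsWeakSol

variable {p a b L : ℝ} {u u' g : ℝ → ℝ}

theorem c1On_asymFlux (hp : 1 ≤ p) (hL : 0 < L) (hg : ContinuousOn g (Icc 0 L))
    (hsol : IsWeakSol p a b L u u' g) :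
    C1On 0 L (fun t => asymFlux p a b (u' t)) (fun t => -g t) :=
  c1On_of_integral_mul_deriv_eq hL ((continuous_asymFlux hp).comp_continuousOn hsol.1.1.2) hg
    fun φ φ' hφ hφ₀ hφL => hsol.2 φ φ' ⟨hφ, hφ₀, hφL⟩

theorem integral_asymE_eq {x y : ℝ} (hp : 1 < p) (hg : ContinuousOn g (Icc 0 L))
    (hsol : IsWeakSol p a b L u u' g) (hx : 0 ≤ x) (hxy : x < y) (hy : y ≤ L)
    (hux : u x = 0) (huy : u y = 0) :
    ∫ t in x..y, asymE p a b (u' t) = ∫ t in x..y, g t * u t := by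
  have hsub : Icc x y ⊆ Icc 0 L := Icc_subset_Icc hx hy
  have hflux := (hsol.c1On_asymFlux hp.le (by linarith) hg).mono hsub
  have hparts := hflux.integral_mul_deriv (hsol.1.1.mono hsub) hxy.le hux huy
  simpa only [asymFlux_mul_self hp, neg_mul, intervalIntegral.integral_neg, neg_neg] using hparts

theorem integral_asymE_eq_mul_integral_abs_rpow {Λ x y : ℝ} (hp : 1 < p)
    (hsol : IsWeakSol p a b L u u' fun t => Λ * |u t| ^ (p - 2) * u t)
    (hx : 0 ≤ x) (hxy : x < y) (hy : y ≤ L) (hux : u x = 0) (huy : u y = 0) :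
    ∫ t in x..y, asymE p a b (u' t) = Λ * ∫ t in x..y, |u t| ^ p := by
  have hg : ContinuousOn (fun t => Λ * |u t| ^ (p - 2) * u t) (Icc 0 L) := by
    simp only [mul_assoc Λ]
    exact continuousOn_const.mul
      ((continuous_abs_rpow_sub_two_mul_self hp).comp_continuousOn hsol.1.1.continuousOn)
  rw [hsol.integral_asymE_eq hp hg hx hxy hy hux huy, ← intervalIntegral.integral_const_mul]
  simp only [mul_assoc Λ, abs_rpow_sub_two_mul_self_mul_self (zero_lt_one.trans hp).ne']

theorem eqOn_zero_of_sub_lt {x y : ℝ} (hp : 1 < p) (ha : 0 < a) (hb : 0 < b)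
    (hsol : IsWeakSol p a b L u u' fun t => lam1 p a b L * |u t| ^ (p - 2) * u t)
    (hx : 0 ≤ x) (hxy : x < y) (hy : y ≤ L) (hlt : y - x < L) (hux : u x = 0) (huy : u y = 0) :
    EqOn u 0 (Icc x y) := by
  have hL : 0 < L := (sub_pos.2 hxy).trans hlt
  have hp₀ : 0 < p := zero_lt_one.trans hp
  have hu : C1On x y u u' := hsol.1.1.mono (Icc_subset_Icc hx hy)
  have hle : ∫ t in x..y, asymE p a b (u' t) ≤
      ((y - x) / L) ^ p * ∫ t in x..y, asymE p a b (u' t) :=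
    (hsol.integral_asymE_eq_mul_integral_abs_rpow hp hx hxy hy hux huy).trans_le
      (lam1_mul_integral_abs_rpow_le_div_rpow_mul hp₀.ne' ha.le hb.le hL hxy hu hux huy)
  have hratio : ((y - x) / L) ^ p < 1 :=
    Real.rpow_lt_one (div_nonneg (sub_pos.2 hxy).le hL.le) ((div_lt_one hL).2 hlt) hp₀
  refine hu.eqOn_zero_of_integral_asymE_nonpos hp₀.le ha hb hxy hux ?_
  by_contra! hpos
  exact hle.not_gt (mul_lt_of_lt_one_left hpos hratio)

theorem ne_zero_of_mem_Ioo {c : ℝ} (hp : 1 < p) (ha : 0 < a) (hb : 0 < b)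
    (hsol : IsWeakSol p a b L u u' fun t => lam1 p a b L * |u t| ^ (p - 2) * u t)
    (hne : ∃ t ∈ Icc (0 : ℝ) L, u t ≠ 0) (hc : c ∈ Ioo 0 L) : u c ≠ 0 := by
  intro huc
  obtain ⟨t, ht, hut⟩ := hne
  obtain ⟨-, hu₀, huL⟩ := hsol.1
  apply hut
  rcases le_total t c with htc | hct
  · exact hsol.eqOn_zero_of_sub_lt hp ha hb le_rfl hc.1 hc.2.le (by linarith [hc.2]) hu₀ huc
      ⟨ht.1, htc⟩
  · exact hsol.eqOn_zero_of_sub_lt hp ha hb hc.1.le hc.2 le_rfl (by linarith [hc.1]) huc huL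
      ⟨hct, ht.2⟩

end IsWeakSol

theorem stmt2 (p a b L : ℝ) (hp : 1 < p) (ha : 0 < a) (hb : 0 < b) (hL : 0 < L)
    (u u' : ℝ → ℝ)
    (hsol : IsWeakSol p a b L u u' (fun t => lam1 p a b L * |u t| ^ (p - 2) * u t))
    (hne : ∃ t ∈ Set.Icc (0:ℝ) L, u t ≠ 0) :
    (∀ t ∈ Set.Ioo (0:ℝ) L, 0 < u t) ∨ (∀ t ∈ Set.Ioo (0:ℝ) L, u t < 0) :=
  pos_or_neg_of_isPreconnected isPreconnected_Ioo
    (hsol.1.1.continuousOn.mono Ioo_subset_Icc_self)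
    fun _ hc => hsol.ne_zero_of_mem_Ioo hp ha hb hne hc
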